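/- Let t > 1 be real, λ > 0, λ ≠ 1, μ = 1/λ, and let X_t be the 9×9 matrix with nonzero entries X₁₁ = X₅₅ = t; X₉₉ = 2/(t+1); X₁₅ = X₅₁ = X₁₉ = X₉₁ = X₅₉ = X₉₅ = 1; X₂₂ = X₆₆ = X₇₇ = λ²; X₃₃ = X₄₄ = X₈₈ = μ²; X₃₇ = X₇₃ = X₆₈ = X₈₆ = √(t/(t+1)) (all other entries 0). Then X_t is entangled, i.e., X_t does not lie in the convex cone generated by matrices of the form Q ⊗ P ∈ M₃(ℂ) ⊗ M₃(ℂ) with Q, P ∈ M₃(ℂ) positive semidefinite; yet both X_t and its partial transpose X_t^τ are positive semidefinite, so X_t is a PPT entangled state (up to normalization). -/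

import Mathlib

open Matrix Complex
open scoped ComplexOrder

/-- The partial transpose of a `9 × 9` matrix viewed as a `3 × 3` array of `3 × 3`
blocks `B_{ij}`: the `(i,j)` block of `pt9 X` is `B_{ji}`. -/
def pt9 (X : Matrix (Fin 9) (Fin 9) ℂ) : Matrix (Fin 9) (Fin 9) ℂ :=
  Matrix.of fun i j =>
    X ⟨3 * ((j : ℕ) / 3) + (i : ℕ) % 3, by have := j.isLt; omega⟩
      ⟨3 * ((i : ℕ) / 3) + (j : ℕ) % 3, by have := i.isLt; omega⟩

/-- The `9 × 9` matrix `X_t` (with parameters `t > 1`, `λ > 0`, `μ = 1/λ`). -/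
noncomputable def Xt (t lam mu : ℝ) : Matrix (Fin 9) (Fin 9) ℂ :=
  !![(t : ℂ), 0, 0, 0, 1, 0, 0, 0, 1;
     0, (lam : ℂ)^2, 0, 0, 0, 0, 0, 0, 0;
     0, 0, (mu : ℂ)^2, 0, 0, 0, ((Real.sqrt (t / (t + 1)) : ℝ) : ℂ), 0, 0;
     0, 0, 0, (mu : ℂ)^2, 0, 0, 0, 0, 0;
     1, 0, 0, 0, (t : ℂ), 0, 0, 0, 1;
     0, 0, 0, 0, 0, (lam : ℂ)^2, 0, ((Real.sqrt (t / (t + 1)) : ℝ) : ℂ), 0;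
     0, 0, ((Real.sqrt (t / (t + 1)) : ℝ) : ℂ), 0, 0, 0, (lam : ℂ)^2, 0, 0;
     0, 0, 0, 0, 0, ((Real.sqrt (t / (t + 1)) : ℝ) : ℂ), 0, (mu : ℂ)^2, 0;
     1, 0, 0, 0, 1, 0, 0, 0, ((2 / (t + 1) : ℝ) : ℂ)]

/-- The equivalence `Fin 3 × Fin 3 ≃ Fin 9` realizing the block structure: the pair
`(r, i)` (inner index `r`, block index `i`) corresponds to `3 * i + r`, so that a
`9 × 9` matrix is the `3 × 3` array of its `3 × 3` blocks. -/
def blockEquiv : Fin 3 × Fin 3 ≃ Fin 9 where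
  toFun p := ⟨3 * (p.2 : ℕ) + (p.1 : ℕ), by have := p.1.isLt; have := p.2.isLt; omega⟩
  invFun q := (⟨(q : ℕ) % 3, by omega⟩, ⟨(q : ℕ) / 3, by have := q.isLt; omega⟩)
  left_inv := by
    rintro ⟨⟨a, ha⟩, ⟨b, hb⟩⟩
    simp only [Prod.mk.injEq, Fin.mk.injEq]
    omega
  right_inv := by
    rintro ⟨q, hq⟩
    simp only [Fin.mk.injEq]
    omega

/-- A `9 × 9` matrix, identified with an element of `M₃(ℂ) ⊗ M₃(ℂ)`, is separable if it
lies in the convex cone generated by the Kronecker products `Q ⊗ P` of positive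
semidefinite matrices `Q, P ∈ M₃(ℂ)`. -/
def Separable9 (X : Matrix (Fin 9) (Fin 9) ℂ) : Prop :=
  ∃ (N : ℕ) (Q P : Fin N → Matrix (Fin 3) (Fin 3) ℂ),
    (∀ i, (Q i).PosSemidef) ∧ (∀ i, (P i).PosSemidef) ∧
      X = ∑ i, Matrix.reindex blockEquiv blockEquiv
        (Matrix.kroneckerMap (· * ·) (Q i) (P i))

/-- A nonnegative multiple of a real rank one matrix. -/
noncomputable def rkOne (c : ℝ) (v : Fin 9 → ℝ) : Matrix (Fin 9) (Fin 9) ℂ :=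
  Matrix.of fun i j => ((c * v i * v j : ℝ) : ℂ)

theorem rkOne_psd (c : ℝ) (hc : 0 ≤ c) (v : Fin 9 → ℝ) : (rkOne c v).PosSemidef := by
  have h := (Matrix.posSemidef_vecMulVec_self_star (fun i => (v i : ℂ))).smul
    (show (0 : ℂ) ≤ (c : ℂ) by exact_mod_cast hc)
  convert h using 1
  ext i j
  simp [rkOne, Matrix.vecMulVec_apply, mul_assoc]

theorem psd_kill {N : ℕ} (Z : Fin N → Matrix (Fin 9) (Fin 9) ℂ) (hZ : ∀ k, (Z k).PosSemidef)
    (w : Fin 9 → ℂ) (h : (∑ k, Z k) *ᵥ w = 0) (k : Fin N) : Z k *ᵥ w = 0 := by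
  rw [← (hZ k).dotProduct_mulVec_zero_iff]
  have h2 : ∑ k, (star w ⬝ᵥ (Z k *ᵥ w)) = 0 := by
    rw [← dotProduct_sum, ← Matrix.sum_mulVec, h, dotProduct_zero]
  exact (Finset.sum_eq_zero_iff_of_nonneg
    (fun k _ => (hZ k).dotProduct_mulVec_nonneg w)).1 h2 k (Finset.mem_univ k)

set_option maxHeartbeats 4000000 in
theorem Xt_psd (t lam mu : ℝ) (ht : 1 < t) (h : lam * mu = 1) :
    (Xt t lam mu).PosSemidef := by
  set s := Real.sqrt (t / (t + 1)) with hs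
  have hs0 : 0 ≤ s := Real.sqrt_nonneg _
  have hs1 : 0 ≤ 1 - s := by
    have : s ≤ 1 := by
      rw [hs, Real.sqrt_le_iff]; refine ⟨by norm_num, ?_⟩; rw [one_pow, div_le_one (by linarith)]; linarith
    linarith
  have hc : (lam : ℂ) * mu = 1 := by exact_mod_cast h
  have ht1 : (t : ℂ) + 1 ≠ 0 := by
    have : t + 1 ≠ 0 := by linarith
    exact_mod_cast this
  have e : Xt t lam mu = rkOne ((t + 1) / 2) ![1, 0, 0, 0, 1, 0, 0, 0, 2 / (t + 1)]
      + rkOne ((t - 1) / 2) ![1, 0, 0, 0, -1, 0, 0, 0, 0]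
      + rkOne 1 ![0, lam, 0, 0, 0, 0, 0, 0, 0] + rkOne 1 ![0, 0, 0, mu, 0, 0, 0, 0, 0]
      + rkOne s ![0, 0, mu, 0, 0, 0, lam, 0, 0]
      + rkOne (1 - s) ![0, 0, mu, 0, 0, 0, 0, 0, 0]
      + rkOne (1 - s) ![0, 0, 0, 0, 0, 0, lam, 0, 0]
      + rkOne s ![0, 0, 0, 0, 0, lam, 0, mu, 0]
      + rkOne (1 - s) ![0, 0, 0, 0, 0, lam, 0, 0, 0]
      + rkOne (1 - s) ![0, 0, 0, 0, 0, 0, 0, mu, 0] := by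
    ext i j
    fin_cases i <;> fin_cases j <;> simp [Xt, rkOne, ← hs] <;>
      first
      | done
      | ring1
      | linear_combination (-(s : ℂ)) * hc
      | (field_simp; done)
      | (field_simp; ring)
  rw [e]
  exact ((((((((((rkOne_psd _ (by linarith) _).add
    (rkOne_psd _ (by linarith) _)).add
    (rkOne_psd _ (by linarith) _)).add
    (rkOne_psd _ (by linarith) _)).add
    (rkOne_psd _ (by linarith) _)).add
    (rkOne_psd _ (by linarith) _)).add
    (rkOne_psd _ (by linarith) _)).add
    (rkOne_psd _ (by linarith) _)).add
    (rkOne_psd _ (by linarith) _)).add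
    (rkOne_psd _ (by linarith) _))

/-- The partial transpose of `Xt`, written out. -/
noncomputable def ptXt (t lam mu s : ℝ) : Matrix (Fin 9) (Fin 9) ℂ :=
  !![(t : ℂ), 0, 0, 0, 0, 0, 0, 0, (s : ℂ);
     0, (lam : ℂ)^2, 0, 1, 0, 0, 0, 0, 0;
     0, 0, (mu : ℂ)^2, 0, 0, 0, 1, 0, 0;
     0, 1, 0, (mu : ℂ)^2, 0, 0, 0, 0, 0;
     0, 0, 0, 0, (t : ℂ), 0, 0, 0, (s : ℂ);
     0, 0, 0, 0, 0, (lam : ℂ)^2, 0, 1, 0;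
     0, 0, 1, 0, 0, 0, (lam : ℂ)^2, 0, 0;
     0, 0, 0, 0, 0, 1, 0, (mu : ℂ)^2, 0;
     (s : ℂ), 0, 0, 0, (s : ℂ), 0, 0, 0, ((2 / (t + 1) : ℝ) : ℂ)]

set_option maxHeartbeats 4000000 in
theorem pt9_gen (X : Matrix (Fin 9) (Fin 9) ℂ) :
    pt9 X = !![X 0 0, X 0 1, X 0 2, X 3 0, X 3 1, X 3 2, X 6 0, X 6 1, X 6 2;
      X 1 0, X 1 1, X 1 2, X 4 0, X 4 1, X 4 2, X 7 0, X 7 1, X 7 2;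
      X 2 0, X 2 1, X 2 2, X 5 0, X 5 1, X 5 2, X 8 0, X 8 1, X 8 2;
      X 0 3, X 0 4, X 0 5, X 3 3, X 3 4, X 3 5, X 6 3, X 6 4, X 6 5;
      X 1 3, X 1 4, X 1 5, X 4 3, X 4 4, X 4 5, X 7 3, X 7 4, X 7 5;
      X 2 3, X 2 4, X 2 5, X 5 3, X 5 4, X 5 5, X 8 3, X 8 4, X 8 5;
      X 0 6, X 0 7, X 0 8, X 3 6, X 3 7, X 3 8, X 6 6, X 6 7, X 6 8;
      X 1 6, X 1 7, X 1 8, X 4 6, X 4 7, X 4 8, X 7 6, X 7 7, X 7 8;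
      X 2 6, X 2 7, X 2 8, X 5 6, X 5 7, X 5 8, X 8 6, X 8 7, X 8 8] := by
  ext i j
  fin_cases i <;> fin_cases j <;> rfl

set_option maxHeartbeats 4000000 in
theorem pt9_Xt (t lam mu : ℝ) :
    pt9 (Xt t lam mu) = ptXt t lam mu (Real.sqrt (t / (t + 1))) := by
  rw [pt9_gen]
  simp [Xt, ptXt]

set_option maxHeartbeats 4000000 in
theorem ptXt_psd (t lam mu : ℝ) (ht : 1 < t) (h : lam * mu = 1) :
    (pt9 (Xt t lam mu)).PosSemidef := by
  set s := Real.sqrt (t / (t + 1)) with hs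
  have hs2 : s ^ 2 = t / (t + 1) := Real.sq_sqrt (by positivity)
  have hc : (lam : ℂ) * mu = 1 := by exact_mod_cast h
  have ht0 : (t : ℂ) ≠ 0 := by
    have : t ≠ 0 := by linarith
    exact_mod_cast this
  have ht1 : (t : ℂ) + 1 ≠ 0 := by
    have : t + 1 ≠ 0 := by linarith
    exact_mod_cast this
  have hs3 : (s : ℂ) ^ 2 = t / (t + 1) := by exact_mod_cast hs2
  rw [pt9_Xt, ← hs]
  have e : ptXt t lam mu s = rkOne (1 / t) ![t, 0, 0, 0, 0, 0, 0, 0, s]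
      + rkOne (1 / t) ![0, 0, 0, 0, t, 0, 0, 0, s]
      + rkOne 1 ![0, lam, 0, mu, 0, 0, 0, 0, 0]
      + rkOne 1 ![0, 0, mu, 0, 0, 0, lam, 0, 0]
      + rkOne 1 ![0, 0, 0, 0, 0, lam, 0, mu, 0] := by
    ext i j
    fin_cases i <;> fin_cases j <;> simp [ptXt, rkOne] <;>
      first
      | done
      | ring1
      | linear_combination (-1 : ℂ) * hc
      | (field_simp; done)
      | (rw [mul_assoc, ← sq, hs3]; field_simp; ring)
  rw [e]
  exact (((((rkOne_psd _ (by positivity) _).add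
    (rkOne_psd _ (by positivity) _)).add
    (rkOne_psd _ (by positivity) _)).add
    (rkOne_psd _ (by positivity) _)).add
    (rkOne_psd _ (by positivity) _))

set_option maxHeartbeats 1000000 in
/-- No nonzero product vector satisfies the range criterion equations. -/
theorem no_product (t s L : ℝ) (ht : 1 < t) (hs0 : 0 < s) (hs : s ^ 2 * (t + 1) = t) (hL : 0 < L)
    (hL1 : L ≠ 1)
    (x y : Fin 3 → ℂ)
    (e0 : x 0 * y 0 + x 1 * y 1 = (t + 1) * (x 2 * y 2))
    (e1 : star (x 0) * y 1 = L * (star (x 1) * y 0))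
    (e2 : L * (star (x 0) * y 2) = star (x 2) * y 0)
    (e3 : star (x 1) * y 2 = L * (star (x 2) * y 1))
    (e4 : s * (star (x 0) * y 0 + star (x 1) * y 1) = t * (star (x 2) * y 2))
    (i r : Fin 3) : x i * y r = 0 := by
  have hLc : (L : ℂ) ≠ 0 := by exact_mod_cast hL.ne'
  -- key two dimensional computation
  have key : ∀ p q u v : ℂ, p * u = (t + 1) * (q * v) → s * (star p * u) = t * (star q * v) →
      q * v = 0 ∧ p * u = 0 := by
    intro p q u v h1 h2
    have n1 : ‖p‖ * ‖u‖ = (t + 1) * (‖q‖ * ‖v‖) := by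
      have := congrArg norm h1
      have h3 : ‖(t : ℂ) + 1‖ = t + 1 := by
        have : (t : ℂ) + 1 = ((t + 1 : ℝ) : ℂ) := by push_cast; rfl
        rw [this, Complex.norm_real, Real.norm_of_nonneg (by linarith)]
      simpa [norm_mul, h3] using this
    have n2 : s * (‖p‖ * ‖u‖) = t * (‖q‖ * ‖v‖) := by
      have := congrArg norm h2
      simpa [norm_mul, norm_star, abs_of_pos hs0, abs_of_pos (by linarith : 0 < t)] using this
    have n3 : (s * (t + 1) - t) * (‖q‖ * ‖v‖) = 0 := by rw [n1] at n2; linarith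
    have n4 : s * (t + 1) - t ≠ 0 := by
      intro h
      have h4 : s * t = t := by
        have : s * (s * (t + 1)) = t := by linarith
        rw [show s * (t + 1) = t by linarith] at this; exact this
      have h5 : s = 1 := by
        have : (s - 1) * t = 0 := by linarith
        rcases mul_eq_zero.1 this with h | h <;> linarith
      rw [h5] at h; linarith
    have n5 : q * v = 0 := by
      rw [← norm_eq_zero, norm_mul]
      exact (mul_eq_zero.1 n3).resolve_left n4
    exact ⟨n5, by rw [h1, n5, mul_zero]⟩
  have hP : x 0 * x 1 * x 2 * (y 0 * y 1 * y 2) = 0 := by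
    have h1 : star (x 0) * star (x 1) * star (x 2) * (y 0 * y 1 * y 2) * ((L : ℂ) ^ 3 - 1) = 0 := by
      have : (star (x 0) * y 1) * (star (x 2) * y 0) * (star (x 1) * y 2) =
        (L * (star (x 1) * y 0)) * (L * (star (x 0) * y 2)) * (L * (star (x 2) * y 1)) := by
        rw [e1, e2, e3]
      linear_combination -this
    have h2 : (L : ℂ) ^ 3 - 1 ≠ 0 := by
      intro h
      have h3 : L ^ 3 - 1 = 0 := by exact_mod_cast h
      have h4 : (L - 1) * (L ^ 2 + L + 1) = 0 := by linarith
      rcases mul_eq_zero.1 h4 with h | h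
      · exact hL1 (by linarith)
      · nlinarith [sq_nonneg L]
    have h3 := (mul_eq_zero.1 h1).resolve_right h2
    simpa using h3
  by_cases hy : y = 0
  · simp [hy]
  by_cases hx : x = 0
  · simp [hx]
  exfalso
  have hx' : ¬ (x 0 = 0 ∧ x 1 = 0 ∧ x 2 = 0) := by
    rintro ⟨a, b, c⟩; apply hx; ext j; fin_cases j <;> simp [a, b, c]
  have hy' : ¬ (y 0 = 0 ∧ y 1 = 0 ∧ y 2 = 0) := by
    rintro ⟨a, b, c⟩; apply hy; ext j; fin_cases j <;> simp [a, b, c]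
  -- pairing: x j = 0 iff y j = 0
  have c0 : x 0 = 0 ↔ y 0 = 0 := by
    constructor <;> intro h <;> simp [h, hLc] at e1 e2 <;> clear key e0 e3 e4 hP hs <;> grind
  have c1 : x 1 = 0 ↔ y 1 = 0 := by
    constructor <;> intro h <;> simp [h, hLc] at e1 e3 <;> clear key e0 e2 e4 hP hs <;> grind
  have c2 : x 2 = 0 ↔ y 2 = 0 := by
    constructor <;> intro h <;> simp [h, hLc] at e2 e3 <;> clear key e0 e1 e4 hP hs <;> grind
  have hz : x 0 = 0 ∨ x 1 = 0 ∨ x 2 = 0 := by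
    simp only [mul_eq_zero] at hP; tauto
  rcases hz with h | h | h
  · have h' := c0.1 h
    have := key (x 1) (x 2) (y 1) (y 2) (by simpa [h] using e0) (by simpa [h] using e4)
    simp only [mul_eq_zero] at this
    clear key e0 e1 e2 e3 e4 hP
    grind
  · have h' := c1.1 h
    have := key (x 0) (x 2) (y 0) (y 2) (by simpa [h] using e0) (by simpa [h] using e4)
    simp only [mul_eq_zero] at this
    clear key e0 e1 e2 e3 e4 hP
    grind
  · have h' := c2.1 h
    simp only [h, zero_mul, mul_zero] at e0
    have h5 : y 0 * (x 0 * star (x 0) + L * (x 1 * star (x 1))) = 0 := by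
      linear_combination star (x 0) * e0 - x 1 * e1
    have h6 : y 1 * (x 0 * star (x 0) + L * (x 1 * star (x 1))) = 0 := by
      linear_combination (L * star (x 1)) * e0 + x 0 * e1
    have h7 : x 0 * star (x 0) + L * (x 1 * star (x 1)) = 0 := by
      rcases mul_eq_zero.1 h5 with h8 | h8
      · rcases mul_eq_zero.1 h6 with h9 | h9
        · exact absurd ⟨h8, h9, h'⟩ hy'
        · exact h9
      · exact h8
    have h8 : Complex.normSq (x 0) + L * Complex.normSq (x 1) = 0 := by
      have : ((Complex.normSq (x 0) + L * Complex.normSq (x 1) : ℝ) : ℂ) = 0 := by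
        push_cast
        rw [← Complex.mul_conj, ← Complex.mul_conj]; exact h7
      exact_mod_cast this
    have h9 := Complex.normSq_nonneg (x 0)
    have h10 := mul_nonneg hL.le (Complex.normSq_nonneg (x 1))
    have h11 : Complex.normSq (x 0) = 0 := by linarith
    have h12 : L * Complex.normSq (x 1) = 0 := by linarith
    have h13 := (mul_eq_zero.1 h12).resolve_left hL.ne'
    exact hx' ⟨Complex.normSq_eq_zero.1 h11, Complex.normSq_eq_zero.1 h13, h⟩

theorem kron_psd (Q P : Matrix (Fin 3) (Fin 3) ℂ) (hQ : Q.PosSemidef) (hP : P.PosSemidef) :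
    (Matrix.reindex blockEquiv blockEquiv (Matrix.kroneckerMap (· * ·) Q P)).PosSemidef := by
  rw [Matrix.reindex_apply]
  exact (hQ.kronecker hP).submatrix _

set_option maxHeartbeats 4000000 in
theorem pt9_sum_kron {N : ℕ} (Q P : Fin N → Matrix (Fin 3) (Fin 3) ℂ) :
    pt9 (∑ k, Matrix.reindex blockEquiv blockEquiv (Matrix.kroneckerMap (· * ·) (Q k) (P k))) =
    ∑ k, Matrix.reindex blockEquiv blockEquiv (Matrix.kroneckerMap (· * ·) (Q k) (P k)ᵀ) := by
  ext i j
  simp only [pt9, Matrix.of_apply, Matrix.sum_apply]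
  refine Finset.sum_congr rfl fun k _ => ?_
  fin_cases i <;> fin_cases j <;> rfl

theorem kron_mulVec (Q P : Matrix (Fin 3) (Fin 3) ℂ) (w : Fin 9 → ℂ) (r i : Fin 3) :
    (Matrix.reindex blockEquiv blockEquiv (Matrix.kroneckerMap (· * ·) Q P) *ᵥ w)
      (blockEquiv (r, i)) =
    ∑ i' : Fin 3, ∑ r' : Fin 3, Q r r' * P i i' * w (blockEquiv (r', i')) := by
  rw [Matrix.mulVec, dotProduct, ← blockEquiv.sum_comp, Fintype.sum_prod_type, Finset.sum_comm]
  simp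

set_option maxHeartbeats 4000000 in
/-- `X_t` is entangled, yet both `X_t` and `X_t^τ` are positive semidefinite: `X_t` is a
PPT entangled state (up to normalization). -/
theorem Xt_entangled_ppt (t lam mu : ℝ) (ht : 1 < t) (hlam : 0 < lam) (h1 : lam ≠ 1)
    (hmu : mu = 1 / lam) :
    ¬ Separable9 (Xt t lam mu) ∧
      (Xt t lam mu).PosSemidef ∧ (pt9 (Xt t lam mu)).PosSemidef := by
  have hlm : lam * mu = 1 := by rw [hmu]; field_simp
  refine ⟨?_, Xt_psd t lam mu ht hlm, ptXt_psd t lam mu ht hlm⟩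
  rintro ⟨N, Q, P, hQ, hP, hX⟩
  set s := Real.sqrt (t / (t + 1)) with hs
  have hs2 : s ^ 2 = t / (t + 1) := Real.sq_sqrt (by positivity)
  have hs3 : s ^ 2 * (t + 1) = t := by
    have : t + 1 ≠ 0 := by linarith
    rw [hs2]; field_simp
  have hs0 : 0 < s := Real.sqrt_pos.2 (by positivity)
  have hs4 : (s : ℂ) ^ 2 * (t + 1) = t := by exact_mod_cast hs3
  have hlc : (lam : ℂ) * mu = 1 := by exact_mod_cast hlm
  have hlc2 : (lam : ℂ) ^ 2 * mu ^ 2 = 1 := by rw [← mul_pow, hlc, one_pow]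
  have ht1 : (t : ℂ) + 1 ≠ 0 := by
    have : t + 1 ≠ 0 := by linarith
    exact_mod_cast this
  have hT := pt9_sum_kron Q P
  rw [← hX, pt9_Xt, ← hs] at hT
  have k0 : Xt t lam mu *ᵥ ![1, 0, 0, 0, 1, 0, 0, 0, -(t + 1)] = 0 := by
    ext i
    fin_cases i <;> simp [Xt, Matrix.mulVec, dotProduct, Fin.sum_univ_succ] <;>
      (try field_simp) <;> (try ring)
  have k1 : ptXt t lam mu s *ᵥ ![0, 1, 0, -(lam : ℂ) ^ 2, 0, 0, 0, 0, 0] = 0 := by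
    ext i
    fin_cases i <;> simp [ptXt, Matrix.mulVec, dotProduct, Fin.sum_univ_succ] <;>
      linear_combination (-1 : ℂ) * hlc2
  have k2 : ptXt t lam mu s *ᵥ ![0, 0, (lam : ℂ) ^ 2, 0, 0, 0, -1, 0, 0] = 0 := by
    ext i
    fin_cases i <;> simp [ptXt, Matrix.mulVec, dotProduct, Fin.sum_univ_succ] <;>
      linear_combination (1 : ℂ) * hlc2
  have k3 : ptXt t lam mu s *ᵥ ![0, 0, 0, 0, 0, 1, 0, -(lam : ℂ) ^ 2, 0] = 0 := by
    ext i
    fin_cases i <;> simp [ptXt, Matrix.mulVec, dotProduct, Fin.sum_univ_succ] <;>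
      linear_combination (-1 : ℂ) * hlc2
  have k4 : ptXt t lam mu s *ᵥ ![(s : ℂ), 0, 0, 0, s, 0, 0, 0, -t] = 0 := by
    ext i
    fin_cases i <;> simp [ptXt, Matrix.mulVec, dotProduct, Fin.sum_univ_succ, ← hs] <;>
      first
      | ring1
      | (field_simp; linear_combination (2 : ℂ) * hs4)
  have hZ1 := fun k => kron_psd (Q k) (P k) (hQ k) (hP k)
  have hZ2 := fun k => kron_psd (Q k) (P k)ᵀ (hQ k) (hP k).transpose
  rw [hX] at k0
  rw [hT] at k1 k2 k3 k4
  have hstar : ∀ k i j, (P k) j i = star ((P k) i j) := fun k i j => ((hP k).1.apply j i).symm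
  have hall : ∀ k i r i' r', P k i i' * Q k r r' = 0 := by
    intro k i r
    have f0 := congrFun (psd_kill _ hZ1 _ k0 k) (blockEquiv (r, i))
    have f1 := congrFun (psd_kill _ hZ2 _ k1 k) (blockEquiv (r, i))
    have f2 := congrFun (psd_kill _ hZ2 _ k2 k) (blockEquiv (r, i))
    have f3 := congrFun (psd_kill _ hZ2 _ k3 k) (blockEquiv (r, i))
    have f4 := congrFun (psd_kill _ hZ2 _ k4 k) (blockEquiv (r, i))
    rw [kron_mulVec] at f0 f1 f2 f3 f4
    have b (a b : Fin 3) (w : Fin 9 → ℂ) : w (blockEquiv (a, b)) =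
      w ⟨3 * (b : ℕ) + (a : ℕ), by omega⟩ := rfl
    simp only [Matrix.transpose_apply, hstar k i, Fin.sum_univ_three, b] at f0 f1 f2 f3 f4
    simp at f0 f1 f2 f3 f4
    have hL1 : lam ^ 2 ≠ 1 := by
      intro h
      have : (lam - 1) * (lam + 1) = 0 := by linarith
      rcases mul_eq_zero.1 this with h | h
      · exact h1 (by linarith)
      · linarith
    intro i' r'
    refine no_product t s (lam ^ 2) ht hs0 hs3 (by positivity) hL1 (P k i) (Q k r)
      ?_ ?_ ?_ ?_ ?_ i' r'
    · linear_combination f0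
    · push_cast; simp only [RCLike.star_def]; linear_combination f1
    · push_cast; simp only [RCLike.star_def]; linear_combination f2
    · push_cast; simp only [RCLike.star_def]; linear_combination f3
    · push_cast; simp only [RCLike.star_def]; linear_combination f4
  have h00 := congrFun (congrFun hX (blockEquiv (0, 0))) (blockEquiv (0, 0))
  rw [Matrix.sum_apply] at h00
  rw [Finset.sum_eq_zero] at h00
  · have : (t : ℂ) = 0 := h00
    have : t = 0 := by exact_mod_cast this
    linarith
  · intro k _
    have := hall k 0 0 0 0
    simp only [Matrix.reindex_apply, Matrix.submatrix_apply, Equiv.symm_apply_apply,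
      Matrix.kroneckerMap_apply]
    rw [mul_comm]; exact this
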